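/- arXiv:1910.05648 — 2 statements merged into one kernel-verified Lean document; each statement's English description precedes it below -/
import Mathlib

section
/- For every integer r ≥ 1, the set of finite sums ∑_{i=1}^N p_i · ∇q_i, where N ∈ ℕ and p_i, q_i are real polynomials in 3 variables of total degree at most r and ∇q = (∂q/∂x₁, ∂q/∂x₂, ∂q/∂x₃) is the gradient (the triple of partial derivatives), is exactly the set of triples (v₁, v₂, v₃) of real polynomials in 3 variables, each of total degree at most 2r − 1. -/
/-!
The degree bound is clear. Conversely, Leibniz' rule gives
`(X j * p) • ∇(X k * q) - (X k * p) • ∇(X j * q) = (p * q) • (X j • ∇ X k - X k • ∇ X j)`,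
and since polynomials of degree at most `r + s` are sums of products `p * q`, every multiple of
degree at most `r + s` of a Koszul field `X j • ∇ X k - X k • ∇ X j` is a sum of fields `p • ∇ q`
with `deg p ≤ r + 1` and `deg q ≤ s + 1`. For `q` homogeneous of degree `t`, Euler's identity
writes `t • (p * q) • ∇ X j` as `(X j * p) • ∇ q` minus such multiples. It remains to split a
polynomial of degree at most `r + s + 1` into products `p * q` and `q` into its homogeneous
components; the constant component is covered by `p • ∇ X j`.
-/

open MvPolynomial

section TotalDegree

variable {σ R : Type*} [CommSemiring R]

lemma totalDegree_pderiv_le (i : σ) (q : MvPolynomial σ R) :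
    (pderiv i q).totalDegree ≤ q.totalDegree - 1 := by
  refine Finset.sup_le fun m hm => Nat.le_sub_of_add_le ?_
  have hm' : m + Finsupp.single i 1 ∈ q.support := by
    rw [mem_support_iff, coeff_pderiv] at hm
    exact mem_support_iff.2 (left_ne_zero_of_mul hm)
  calc m.degree + 1 = (m + Finsupp.single i 1).degree := by
        rw [map_add, Finsupp.degree_single]
    _ ≤ q.totalDegree := le_totalDegree hm'

lemma totalDegree_mul_pderiv_le {r s : ℕ} {p q : MvPolynomial σ R} (hp : p.totalDegree ≤ r)
    (hq : q.totalDegree ≤ s + 1) (i : σ) : (p * pderiv i q).totalDegree ≤ r + s :=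
  calc (p * pderiv i q).totalDegree
      ≤ p.totalDegree + (pderiv i q).totalDegree := totalDegree_mul _ _
    _ ≤ r + s := add_le_add hp <| (totalDegree_pderiv_le i q).trans (Nat.sub_le_of_le_add hq)

lemma restrictTotalDegree_add (m n : ℕ) :
    restrictTotalDegree σ R (m + n) = restrictTotalDegree σ R m * restrictTotalDegree σ R n := by
  have preimage_Iic (k : ℕ) : restrictTotalDegree σ R k =
      restrictSupport R (Finsupp.degree ⁻¹' Set.Iic k) := rfl
  rw [preimage_Iic, preimage_Iic, preimage_Iic, ← restrictSupport_add,
    ← Finsupp.degree_preimage_add]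
  congr 2
  ext d
  simp only [Set.mem_Iic, Set.mem_add]
  refine ⟨fun hd => ⟨min d m, min_le_right d m, d - min d m, ?_, ?_⟩, ?_⟩
  · omega
  · omega
  · rintro ⟨a, ha, b, hb, rfl⟩
    exact add_le_add ha hb

lemma totalDegree_X_mul_le {n : ℕ} {p : MvPolynomial σ R} (hp : p.totalDegree ≤ n) (j : σ) :
    (X j * p).totalDegree ≤ n + 1 := by
  calc (X j * p).totalDegree
      ≤ (X j : MvPolynomial σ R).totalDegree + p.totalDegree := totalDegree_mul _ _
    _ ≤ 1 + n := add_le_add (isHomogeneous_X R j).totalDegree_le hp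
    _ = n + 1 := add_comm 1 n

end TotalDegree

section Gradient

variable {σ R : Type*} [CommSemiring R]

/-- The gradient `∇ q = (∂q/∂xⱼ)ⱼ`, as a derivation with values in vector fields with polynomial
components, so that Leibniz' rule is available for it. -/
noncomputable def grad (σ R : Type*) [CommSemiring R] :
    Derivation R (MvPolynomial σ R) (σ → MvPolynomial σ R) where
  toLinearMap := LinearMap.pi fun j => (pderiv j).toLinearMap
  map_one_eq_zero' := by ext1 j; exact pderiv_one
  leibniz' p q := by ext1 j; exact (pderiv j).leibniz p q

lemma grad_apply (q : MvPolynomial σ R) (j : σ) : grad σ R q j = pderiv j q := rfl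

lemma sum_smul_grad_X [Fintype σ] (v : σ → MvPolynomial σ R) :
    ∑ j, v j • grad σ R (X j) = v := by
  classical
  ext1 i
  simp [grad_apply, pderiv_X, Pi.single_apply]

/-- The span of the fields `p • ∇ q` with `deg p ≤ r` and `deg q ≤ s`. It is the set of finite sums
of such fields, because scalars can be absorbed into `p`; being a submodule, it allows induction on
sums and division by unit scalars. -/
noncomputable def smulGradSpan (σ R : Type*) [CommSemiring R] (r s : ℕ) :
    Submodule R (σ → MvPolynomial σ R) :=
  Submodule.span R {v | ∃ p q : MvPolynomial σ R,
    p.totalDegree ≤ r ∧ q.totalDegree ≤ s ∧ p • grad σ R q = v}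

variable {r s : ℕ}

lemma smul_grad_mem {p q : MvPolynomial σ R} (hp : p.totalDegree ≤ r) (hq : q.totalDegree ≤ s) :
    p • grad σ R q ∈ smulGradSpan σ R r s :=
  Submodule.subset_span ⟨p, q, hp, hq, rfl⟩

lemma mem_smulGradSpan_iff_exists_sum {v : σ → MvPolynomial σ R} :
    v ∈ smulGradSpan σ R r s ↔ ∃ (N : ℕ) (p q : Fin N → MvPolynomial σ R),
      (∀ i, (p i).totalDegree ≤ r) ∧ (∀ i, (q i).totalDegree ≤ s) ∧
      ∀ j, v j = ∑ i, p i * pderiv j (q i) := by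
  constructor
  · intro hv
    obtain ⟨N, c, w, rfl⟩ := Submodule.mem_span_set'.1 hv
    choose p q hp hq hw using fun i => (w i).2
    refine ⟨N, fun i => c i • p i, q, fun i => (totalDegree_smul_le _ _).trans (hp i), hq,
      fun j => ?_⟩
    simp [← hw, grad_apply]
  · rintro ⟨N, p, q, hp, hq, hv⟩
    have hv_sum : v = ∑ i, p i • grad σ R (q i) := by
      ext1 j
      simp [hv, grad_apply]
    exact hv_sum ▸ Submodule.sum_mem _ fun i _ => smul_grad_mem (hp i) (hq i)

lemma totalDegree_le_of_mem_smulGradSpan {v : σ → MvPolynomial σ R}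
    (hv : v ∈ smulGradSpan σ R r (s + 1)) (j : σ) : (v j).totalDegree ≤ r + s := by
  obtain ⟨N, p, q, hp, hq, hv⟩ := mem_smulGradSpan_iff_exists_sum.1 hv
  rw [hv j]
  exact totalDegree_finsetSum_le fun i _ => totalDegree_mul_pderiv_le (hp i) (hq i) j

end Gradient

section Generation

variable {σ R : Type*} [CommRing R] {r s : ℕ}

/-- The Koszul syzygy of `X j` and `X k`, as a vector field: it is orthogonal to the position
field `(X i)ᵢ`. -/
noncomputable def koszulField (σ R : Type*) [CommRing R] (j k : σ) : σ → MvPolynomial σ R :=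
  (X j : MvPolynomial σ R) • grad σ R (X k) - (X k : MvPolynomial σ R) • grad σ R (X j)

lemma mul_smul_koszulField (p q : MvPolynomial σ R) (j k : σ) :
    (p * q) • koszulField σ R j k =
      (X j * p) • grad σ R (X k * q) - (X k * p) • grad σ R (X j * q) := by
  simp only [koszulField, Derivation.leibniz]
  module

lemma smul_koszulField_mem {u : MvPolynomial σ R} (hu : u.totalDegree ≤ r + s) (j k : σ) :
    u • koszulField σ R j k ∈ smulGradSpan σ R (r + 1) (s + 1) := by
  rw [← mem_restrictTotalDegree, restrictTotalDegree_add] at hu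
  induction hu using Submodule.mul_induction_on' with
  | mem_mul_mem p hp q hq =>
    rw [mem_restrictTotalDegree] at hp hq
    rw [mul_smul_koszulField]
    exact sub_mem (smul_grad_mem (totalDegree_X_mul_le hp j) (totalDegree_X_mul_le hq k))
      (smul_grad_mem (totalDegree_X_mul_le hp k) (totalDegree_X_mul_le hq j))
  | add u₁ _ u₂ _ hu₁ hu₂ =>
    rw [add_smul]
    exact add_mem hu₁ hu₂

lemma natCast_smul_mul_smul_grad_X [Fintype σ] {t : ℕ} {q : MvPolynomial σ R}
    (hq : q.IsHomogeneous t) (p : MvPolynomial σ R) (j : σ) :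
    (t : R) • ((p * q) • grad σ R (X j)) = (X j * p) • grad σ R q -
      ∑ k, (p * pderiv k q) • koszulField σ R j k := by
  have euler : ∑ k, (p * pderiv k q * X k) • grad σ R (X j) =
      (t : R) • ((p * q) • grad σ R (X j)) := by
    calc ∑ k, (p * pderiv k q * X k) • grad σ R (X j)
        = (p * ∑ k, X k * pderiv k q) • grad σ R (X j) := by
          simp only [Finset.mul_sum, Finset.sum_smul]
          exact Finset.sum_congr rfl fun k _ => by rw [mul_comm (X k), mul_assoc]
      _ = (t : R) • ((p * q) • grad σ R (X j)) := by
          rw [hq.sum_X_mul_pderiv, mul_smul_comm, smul_assoc, Nat.cast_smul_eq_nsmul]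
  have grad_expansion : ∑ k, (p * pderiv k q * X j) • grad σ R (X k) =
      (X j * p) • grad σ R q := by
    calc ∑ k, (p * pderiv k q * X j) • grad σ R (X k)
        = (X j * p) • ∑ k, grad σ R q k • grad σ R (X k) := by
          simp only [Finset.smul_sum, smul_smul, grad_apply]
          exact Finset.sum_congr rfl fun k _ => by rw [mul_comm _ (X j), mul_assoc]
      _ = (X j * p) • grad σ R q := by rw [sum_smul_grad_X]
  simp only [koszulField, smul_sub, smul_smul (p * pderiv _ q), Finset.sum_sub_distrib, euler,
    grad_expansion, sub_sub_cancel]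

lemma mul_smul_grad_X_mem_of_isHomogeneous [Finite σ] {t : ℕ} {p q : MvPolynomial σ R}
    (hp : p.totalDegree ≤ r) (hq : q.IsHomogeneous t) (hts : t ≤ s + 1) (ht : IsUnit (t : R))
    (j : σ) : (p * q) • grad σ R (X j) ∈ smulGradSpan σ R (r + 1) (s + 1) := by
  cases nonempty_fintype σ
  rw [← Submodule.smul_mem_iff_of_isUnit _ ht, natCast_smul_mul_smul_grad_X hq]
  have hq_deg : q.totalDegree ≤ s + 1 := hq.totalDegree_le.trans hts
  exact sub_mem (smul_grad_mem (totalDegree_X_mul_le hp j) hq_deg)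
    (sum_mem fun k _ => smul_koszulField_mem (totalDegree_mul_pderiv_le hp hq_deg k) j k)

lemma mul_smul_grad_X_mem [Finite σ] (hs_factorial : IsUnit ((s + 1).factorial : R))
    {p q : MvPolynomial σ R} (hp : p.totalDegree ≤ r) (hq : q.totalDegree ≤ s + 1) (j : σ) :
    (p * q) • grad σ R (X j) ∈ smulGradSpan σ R (r + 1) (s + 1) := by
  rw [← sum_homogeneousComponent q, Finset.mul_sum, Finset.sum_smul]
  refine sum_mem fun t ht => ?_
  have hts : t ≤ s + 1 := (Finset.mem_range_succ_iff.1 ht).trans hq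
  rcases t.eq_zero_or_pos with rfl | ht_pos
  · refine smul_grad_mem ?_ ((isHomogeneous_X R j).totalDegree_le.trans (Nat.le_add_left 1 s))
    calc (p * homogeneousComponent 0 q).totalDegree
        ≤ p.totalDegree + (homogeneousComponent 0 q).totalDegree := totalDegree_mul _ _
      _ ≤ r + 1 := by
          rw [homogeneousComponent_zero, totalDegree_C]
          exact hp.trans r.le_succ
  · have ht_unit : IsUnit (t : R) :=
      isUnit_of_dvd_unit (Nat.cast_dvd_cast (Nat.dvd_factorial ht_pos hts)) hs_factorial
    exact mul_smul_grad_X_mem_of_isHomogeneous hp (homogeneousComponent_isHomogeneous t q) hts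
      ht_unit j

lemma smul_grad_X_mem [Finite σ] (hs_factorial : IsUnit ((s + 1).factorial : R))
    {u : MvPolynomial σ R} (hu : u.totalDegree ≤ r + (s + 1)) (j : σ) :
    u • grad σ R (X j) ∈ smulGradSpan σ R (r + 1) (s + 1) := by
  rw [← mem_restrictTotalDegree, restrictTotalDegree_add] at hu
  induction hu using Submodule.mul_induction_on' with
  | mem_mul_mem p hp q hq =>
    rw [mem_restrictTotalDegree] at hp hq
    exact mul_smul_grad_X_mem hs_factorial hp hq j
  | add u₁ _ u₂ _ hu₁ hu₂ =>
    rw [add_smul]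
    exact add_mem hu₁ hu₂

lemma mem_smulGradSpan_iff_totalDegree_le [Finite σ] (hs_factorial : IsUnit ((s + 1).factorial : R))
    {v : σ → MvPolynomial σ R} :
    v ∈ smulGradSpan σ R (r + 1) (s + 1) ↔ ∀ j, (v j).totalDegree ≤ r + 1 + s := by
  refine ⟨totalDegree_le_of_mem_smulGradSpan, fun hv => ?_⟩
  cases nonempty_fintype σ
  rw [← sum_smul_grad_X v]
  exact sum_mem fun j _ => smul_grad_X_mem hs_factorial ((hv j).trans_eq (by ring)) j

end Generation

theorem sums_of_p_grad_q_three_vars_general {σ R : Type*} [Finite σ] [CommRing R] {r s : ℕ}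
    (hr : 1 ≤ r) (hs : 1 ≤ s) (hs_factorial : IsUnit (s.factorial : R)) :
    {v : σ → MvPolynomial σ R |
      ∃ (N : ℕ) (p q : Fin N → MvPolynomial σ R),
        (∀ i, (p i).totalDegree ≤ r) ∧ (∀ i, (q i).totalDegree ≤ s) ∧
        ∀ j, v j = ∑ i, p i * pderiv j (q i)} =
    {v : σ → MvPolynomial σ R | ∀ j, (v j).totalDegree ≤ r + s - 1} := by
  obtain ⟨r, rfl⟩ := Nat.exists_eq_add_of_le' hr
  obtain ⟨s, rfl⟩ := Nat.exists_eq_add_of_le' hs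
  ext v
  exact mem_smulGradSpan_iff_exists_sum.symm.trans <|
    mem_smulGradSpan_iff_totalDegree_le hs_factorial

/-- Lemma C.2 of the paper for `n = 3`: for `r ≥ 1`, the set of finite sums
`∑ᵢ pᵢ ∇qᵢ` with `pᵢ, qᵢ` real polynomials in three variables of total degree at
most `r` is exactly the set of triples of real polynomials in three variables of
total degree at most `2r - 1`. -/
theorem sums_of_p_grad_q_three_vars (r : ℕ) (hr : 1 ≤ r) :
    {v : Fin 3 → MvPolynomial (Fin 3) ℝ |
      ∃ (N : ℕ) (p q : Fin N → MvPolynomial (Fin 3) ℝ),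
        (∀ i, (p i).totalDegree ≤ r) ∧ (∀ i, (q i).totalDegree ≤ r) ∧
        ∀ j : Fin 3, v j = ∑ i, p i * MvPolynomial.pderiv j (q i)} =
    {v : Fin 3 → MvPolynomial (Fin 3) ℝ |
      ∀ j : Fin 3, (v j).totalDegree ≤ 2 * r - 1} := by
  rw [two_mul]
  exact sums_of_p_grad_q_three_vars_general hr hr (Nat.cast_ne_zero.2 r.factorial_ne_zero).isUnit
end

section
/- Let (Ω, μ) be a measure space, n ≥ 1 an integer, and Δt > 0 a real number. Let u₀, u₁ : Ω → ℝⁿ and D₀, D₁, S₀, S₁, Φ, E₀, E₁, F, G, T_D, T_S : Ω → ℝ be measurable functions such that every product of these functions appearing below is μ-integrable, and set u_{1/2} := (u₀ + u₁)/2. Assume: (i) the discrete-gradient relation (D₁ − D₀)·F + (S₁ − S₀)·G = (D₁ − D₀)·( (1/2) u₀·u₁ − Φ ) − (E₁ − E₀) holds μ-almost everywhere; (ii) the discrete momentum equation tested at u_{1/2} holds: (1/Δt) ∫_Ω ( D₁ u₁ − D₀ u₀ ) · u_{1/2} dμ + ∫_Ω F·T_D dμ + ∫_Ω G·T_S dμ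 = 0; (iii) the discrete continuity equation tested at F holds: ∫_Ω ((D₁ − D₀)/Δt)·F dμ + ∫_Ω T_D·F dμ = 0; (iv) the discrete entropy equation tested at G holds: ∫_Ω ((S₁ − S₀)/Δt)·G dμ + ∫_Ω T_S·G dμ = 0. Then the total energy is preserved: ∫_Ω ( (1/2) D₁ |u₁|² + E₁ + D₁ Φ ) dμ = ∫_Ω ( (1/2) D₀ |u₀|² + E₀ + D₀ Φ ) dμ. -/
open MeasureTheory
open scoped RealInnerProductSpace

/-!
Pairing the momentum increment with the midpoint velocity gives the kinetic energy increment plus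
the defect `(D₁ - D₀) ⟪u₀, u₁⟫ / 2`, and the discrete-gradient relation converts this defect into
the potential and internal energy increments plus `(D₁ - D₀) F + (S₁ - S₀) G`. After integration,
the continuity equation tested at `F` and the entropy equation tested at `G` show that the last term
alone accounts for the pairing prescribed by the momentum equation, so the total energy is constant.
-/

theorem inner_smul_sub_smul_midpoint {V : Type*} [SeminormedAddCommGroup V]
    [InnerProductSpace ℝ V] (a b : ℝ) (u v : V) :
    ⟪b • v - a • u, (1 / 2 : ℝ) • (u + v)⟫ =
      (1 / 2) * b * ‖v‖ ^ 2 - (1 / 2) * a * ‖u‖ ^ 2 + (b - a) * ((1 / 2) * ⟪u, v⟫) := by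
  simp only [inner_sub_left, real_inner_smul_left, real_inner_smul_right, inner_add_right,
    real_inner_self_eq_norm_sq, real_inner_comm u v]
  ring

theorem integral_increment_mul_eq_of_transport {Ω : Type*} [MeasurableSpace Ω] {μ : Measure Ω}
    {Δt τ : ℝ} (hΔt : Δt ≠ 0) {δ f : Ω → ℝ} (h : ∫ x, δ x / Δt * f x ∂μ + τ = 0) :
    ∫ x, δ x * f x ∂μ = -(Δt * τ) := by
  simp only [div_mul_eq_mul_div, integral_div] at h
  field_simp at h
  linarith

section Energy

variable {Ω V : Type*} [SeminormedAddCommGroup V]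

/-- The total energy density `D |u|² / 2 + E + D Φ` of a fluid with mass density `D`, velocity `u`
and internal energy density `E` (per unit volume, whereas the potential `Φ` is per unit mass). -/
noncomputable def totalEnergyDensity (D : Ω → ℝ) (u : Ω → V) (E Φ : Ω → ℝ) (x : Ω) : ℝ :=
  (1 / 2) * D x * ‖u x‖ ^ 2 + E x + D x * Φ x

theorem integrable_totalEnergyDensity [MeasurableSpace Ω] {μ : Measure Ω}
    {D : Ω → ℝ} {u : Ω → V} {E Φ : Ω → ℝ}
    (hDu : Integrable (fun x => D x * ‖u x‖ ^ 2) μ) (hE : Integrable E μ)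
    (hDΦ : Integrable (fun x => D x * Φ x) μ) : Integrable (totalEnergyDensity D u E Φ) μ := by
  unfold totalEnergyDensity
  simpa only [mul_assoc] using ((hDu.const_mul (1 / 2)).fun_add hE).fun_add hDΦ

variable [InnerProductSpace ℝ V] {u₀ u₁ : Ω → V} {D₀ D₁ S₀ S₁ Φ E₀ E₁ F G : Ω → ℝ}

theorem inner_momentum_increment_midpoint_eq {x : Ω}
    (hgrad : (D₁ x - D₀ x) * F x + (S₁ x - S₀ x) * G x =
      (D₁ x - D₀ x) * ((1 / 2) * ⟪u₀ x, u₁ x⟫ - Φ x) - (E₁ x - E₀ x)) :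
    ⟪D₁ x • u₁ x - D₀ x • u₀ x, (1 / 2 : ℝ) • (u₀ x + u₁ x)⟫ =
      totalEnergyDensity D₁ u₁ E₁ Φ x - totalEnergyDensity D₀ u₀ E₀ Φ x +
        ((D₁ x - D₀ x) * F x + (S₁ x - S₀ x) * G x) := by
  rw [inner_smul_sub_smul_midpoint, hgrad]
  unfold totalEnergyDensity
  ring

variable [MeasurableSpace Ω] {μ : Measure Ω}

theorem integral_inner_momentum_increment_midpoint
    (hH₀ : Integrable (totalEnergyDensity D₀ u₀ E₀ Φ) μ)
    (hH₁ : Integrable (totalEnergyDensity D₁ u₁ E₁ Φ) μ)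
    (hDF : Integrable (fun x => (D₁ x - D₀ x) * F x) μ)
    (hSG : Integrable (fun x => (S₁ x - S₀ x) * G x) μ)
    (hgrad : ∀ᵐ x ∂μ, (D₁ x - D₀ x) * F x + (S₁ x - S₀ x) * G x =
      (D₁ x - D₀ x) * ((1 / 2) * ⟪u₀ x, u₁ x⟫ - Φ x) - (E₁ x - E₀ x)) :
    ∫ x, ⟪D₁ x • u₁ x - D₀ x • u₀ x, (1 / 2 : ℝ) • (u₀ x + u₁ x)⟫ ∂μ =
      ∫ x, totalEnergyDensity D₁ u₁ E₁ Φ x ∂μ - ∫ x, totalEnergyDensity D₀ u₀ E₀ Φ x ∂μ +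
        (∫ x, (D₁ x - D₀ x) * F x ∂μ + ∫ x, (S₁ x - S₀ x) * G x ∂μ) := by
  rw [integral_congr_ae (hgrad.mono fun _ => inner_momentum_increment_midpoint_eq),
    integral_add (hH₁.sub' hH₀) (hDF.fun_add hSG), integral_sub hH₁ hH₀,
    integral_add hDF hSG]

/-- The transport terms tested at `F` and `G` are arbitrary reals `τ_D` and `τ_S`, which allows
contributions other than integrals over `Ω`, such as sums over cell interfaces. -/
theorem energy_preservation_baroclinic_general {Δt τ_D τ_S : ℝ} (hΔt : Δt ≠ 0)
    (hH₀ : Integrable (totalEnergyDensity D₀ u₀ E₀ Φ) μ)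
    (hH₁ : Integrable (totalEnergyDensity D₁ u₁ E₁ Φ) μ)
    (hDF : Integrable (fun x => (D₁ x - D₀ x) * F x) μ)
    (hSG : Integrable (fun x => (S₁ x - S₀ x) * G x) μ)
    (hgrad : ∀ᵐ x ∂μ, (D₁ x - D₀ x) * F x + (S₁ x - S₀ x) * G x =
      (D₁ x - D₀ x) * ((1 / 2) * ⟪u₀ x, u₁ x⟫ - Φ x) - (E₁ x - E₀ x))
    (hmomentum : (1 / Δt) * ∫ x, ⟪D₁ x • u₁ x - D₀ x • u₀ x,
        (1 / 2 : ℝ) • (u₀ x + u₁ x)⟫ ∂μ + τ_D + τ_S = 0)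
    (hcontinuity : ∫ x, (D₁ x - D₀ x) / Δt * F x ∂μ + τ_D = 0)
    (hentropy : ∫ x, (S₁ x - S₀ x) / Δt * G x ∂μ + τ_S = 0) :
    ∫ x, totalEnergyDensity D₁ u₁ E₁ Φ x ∂μ = ∫ x, totalEnergyDensity D₀ u₀ E₀ Φ x ∂μ := by
  have hmassIncr := integral_increment_mul_eq_of_transport hΔt hcontinuity
  have hentropyIncr := integral_increment_mul_eq_of_transport hΔt hentropy
  rw [integral_inner_momentum_increment_midpoint hH₀ hH₁ hDF hSG hgrad,
    hmassIncr, hentropyIncr] at hmomentum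
  field_simp at hmomentum
  linarith

end Energy

/-- Energy preservation of the variational time discretization of the baroclinic
(fully compressible) fluid (Section 6 of the paper, scheme (5.21)-(5.23)). -/
theorem energy_preservation_baroclinic
    {Ω : Type*} [MeasurableSpace Ω] (μ : Measure Ω) (n : ℕ) (hn : 1 ≤ n)
    (Δt : ℝ) (hΔt : 0 < Δt)
    (u₀ u₁ : Ω → EuclideanSpace ℝ (Fin n))
    (D₀ D₁ S₀ S₁ Φ E₀ E₁ F G T_D T_S : Ω → ℝ)
    (hu₀ : Measurable u₀) (hu₁ : Measurable u₁)
    (hD₀ : Measurable D₀) (hD₁ : Measurable D₁)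
    (hS₀ : Measurable S₀) (hS₁ : Measurable S₁) (hΦ : Measurable Φ)
    (hE₀ : Measurable E₀) (hE₁ : Measurable E₁)
    (hF : Measurable F) (hG : Measurable G)
    (hT_D : Measurable T_D) (hT_S : Measurable T_S)
    -- integrability of every product of these functions appearing below
    (hint₁ : Integrable (fun x => D₀ x * ‖u₀ x‖ ^ 2) μ)
    (hint₂ : Integrable (fun x => D₁ x * ‖u₁ x‖ ^ 2) μ)
    (hint₃ : Integrable (fun x => D₀ x * ⟪u₀ x, u₁ x⟫) μ)
    (hint₄ : Integrable (fun x => D₁ x * ⟪u₀ x, u₁ x⟫) μ)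
    (hint₅ : Integrable (fun x => D₀ x * Φ x) μ)
    (hint₆ : Integrable (fun x => D₁ x * Φ x) μ)
    (hintE₀ : Integrable E₀ μ) (hintE₁ : Integrable E₁ μ)
    (hintFTD : Integrable (fun x => F x * T_D x) μ)
    (hintGTS : Integrable (fun x => G x * T_S x) μ)
    (hintD₀F : Integrable (fun x => D₀ x * F x) μ)
    (hintD₁F : Integrable (fun x => D₁ x * F x) μ)
    (hintS₀G : Integrable (fun x => S₀ x * G x) μ)
    (hintS₁G : Integrable (fun x => S₁ x * G x) μ)
    -- (i) the discrete-gradient relation, μ-almost everywhere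
    (hi : ∀ᵐ x ∂μ, (D₁ x - D₀ x) * F x + (S₁ x - S₀ x) * G x =
      (D₁ x - D₀ x) * ((1 / 2) * ⟪u₀ x, u₁ x⟫ - Φ x) - (E₁ x - E₀ x))
    -- (ii) the discrete momentum equation tested at `u_{1/2}`
    (hii : (1 / Δt) * ∫ x, ⟪D₁ x • u₁ x - D₀ x • u₀ x,
        (1 / 2 : ℝ) • (u₀ x + u₁ x)⟫ ∂μ
      + ∫ x, F x * T_D x ∂μ + ∫ x, G x * T_S x ∂μ = 0)
    -- (iii) the discrete continuity equation tested at `F`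
    (hiii : ∫ x, (D₁ x - D₀ x) / Δt * F x ∂μ + ∫ x, T_D x * F x ∂μ = 0)
    -- (iv) the discrete entropy equation tested at `G`
    (hiv : ∫ x, (S₁ x - S₀ x) / Δt * G x ∂μ + ∫ x, T_S x * G x ∂μ = 0) :
    ∫ x, ((1 / 2) * D₁ x * ‖u₁ x‖ ^ 2 + E₁ x + D₁ x * Φ x) ∂μ =
    ∫ x, ((1 / 2) * D₀ x * ‖u₀ x‖ ^ 2 + E₀ x + D₀ x * Φ x) ∂μ := by
  exact energy_preservation_baroclinic_general hΔt.ne'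
    (integrable_totalEnergyDensity hint₁ hintE₀ hint₅)
    (integrable_totalEnergyDensity hint₂ hintE₁ hint₆)
    (by simpa only [sub_mul] using hintD₁F.sub' hintD₀F)
    (by simpa only [sub_mul] using hintS₁G.sub' hintS₀G) hi hii
    (by simpa only [mul_comm (T_D _)] using hiii) (by simpa only [mul_comm (T_S _)] using hiv)
end
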